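/- arXiv:1805.03566 — 3 statements merged into one kernel-verified Lean document; each statement's English description precedes it below -/
import Mathlib

section
/- Let ν be a lattice path with m east and n north steps. A subset T ⊆ A_ν is a ν-tree if and only if it satisfies the following four conditions (i.e., T is a non-crossing tree-like tableau, translated to lattice points): (i) (0,n) ∈ T; (ii) every point of T other than (0,n) has either a point of T above it in the same column or a point of T to its left in the same row, but not both; (iii) every row and every column of A_ν contains at least one point of T; (iv) T is non-crossing: no point of A_ν not in T has both a point of T above it in the same column and a point of T to its left in the same row. -/
open scoped Classical

/-! Lattice paths: `true` = north step, `false` = east step. -/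

def eastSteps (ν : List Bool) : ℕ := ν.count false
def northSteps (ν : List Bool) : ℕ := ν.count true

/-- Height at which the path first reaches abscissa `x`. -/
def heightAt : List Bool → ℕ → ℕ
  | _, 0 => 0
  | [], _ + 1 => 0
  | true :: rest, x + 1 => heightAt rest (x + 1) + 1
  | false :: rest, x + 1 => heightAt rest x

/-- Lattice point of a path after `i` steps. -/
def pointAt (μ : List Bool) (i : ℕ) : ℕ × ℕ :=
  ((μ.take i).count false, (μ.take i).count true)

/-- The set `A_ν` of lattice points weakly above `ν`. -/
def APts (ν : List Bool) : Set (ℕ × ℕ) :=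
  {p | p.1 ≤ eastSteps ν ∧ heightAt ν p.1 ≤ p.2 ∧ p.2 ≤ northSteps ν}

def Incompatible (ν : List Bool) (p q : ℕ × ℕ) : Prop :=
  (p.1 < q.1 ∧ p.2 < q.2 ∧ (q.1, p.2) ∈ APts ν) ∨
    (q.1 < p.1 ∧ q.2 < p.2 ∧ (p.1, q.2) ∈ APts ν)

def Compatible (ν : List Bool) (p q : ℕ × ℕ) : Prop := ¬ Incompatible ν p q

def IsNuTree (ν : List Bool) (T : Set (ℕ × ℕ)) : Prop :=
  T ⊆ APts ν ∧ T.Pairwise (Compatible ν) ∧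
    ∀ T', T' ⊆ APts ν → T'.Pairwise (Compatible ν) → T ⊆ T' → T' = T

def IsRightRotationAt (T T' : Set (ℕ × ℕ)) (q q' : ℕ × ℕ) : Prop :=
  ∃ x y x'' y', q = (x, y) ∧ q' = (x'', y') ∧ x < x'' ∧ y < y' ∧
    (x, y) ∈ T ∧ (x, y') ∈ T ∧ (x'', y) ∈ T ∧
    (∀ b, y < b → b < y' → (x, b) ∉ T) ∧
    (∀ a, x < a → a < x'' → (a, y) ∉ T) ∧
    (∀ a, x < a → a < x'' → (a, y') ∉ T) ∧
    (∀ b, y < b → b < y' → (x'', b) ∉ T) ∧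
    T' = (T \ {(x, y)}) ∪ {(x'', y')}

def IsRightRotation (T T' : Set (ℕ × ℕ)) : Prop :=
  ∃ q q', IsRightRotationAt T T' q q'

/-- Order relation of the rotation poset of ν-trees. -/
def TreeLE (ν : List Bool) : Set (ℕ × ℕ) → Set (ℕ × ℕ) → Prop :=
  Relation.ReflTransGen fun A B => IsNuTree ν A ∧ IsNuTree ν B ∧ IsRightRotation A B

def IsNuPath (ν μ : List Bool) : Prop :=
  eastSteps μ = eastSteps ν ∧ northSteps μ = northSteps ν ∧
    ∀ i ≤ μ.length, pointAt μ i ∈ APts ν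

noncomputable def horiz (ν : List Bool) (p : ℕ × ℕ) : ℕ :=
  sSup {k | (p.1 + k, p.2) ∈ APts ν}

/-- Covering relation of the ν-Tamari lattice. -/
def TamariCover (ν μ μ' : List Bool) : Prop :=
  IsNuPath ν μ ∧ IsNuPath ν μ' ∧
    ∃ i j, 0 < i ∧ i < j ∧ j ≤ μ.length ∧
      μ.getD (i - 1) true = false ∧ μ.getD i false = true ∧
      horiz ν (pointAt μ j) = horiz ν (pointAt μ i) ∧
      (∀ k, i < k → k < j → horiz ν (pointAt μ k) ≠ horiz ν (pointAt μ i)) ∧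
      μ' = μ.take (i - 1) ++ (μ.drop i).take (j - i) ++ [false] ++ μ.drop j

def TamariLE (ν : List Bool) : List Bool → List Bool → Prop :=
  Relation.ReflTransGen (TamariCover ν)

/-! Flushing maps -/

def rowAvail (ν : List Bool) (y : ℕ) : List ℕ :=
  ((List.range (eastSteps ν + 1)).filter fun x => decide (heightAt ν x ≤ y)).reverse

def pointsAtHeight (μ : List Bool) (y : ℕ) : ℕ :=
  ((List.range (μ.length + 1)).filter fun i => decide ((μ.take i).count true = y)).length

def rflushAux (ν : List Bool) : List ℕ → ℕ → List ℕ → List (ℕ × ℕ)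
  | [], _, _ => []
  | c :: rest, y, forbidden =>
    let placed := ((rowAvail ν y).filter fun x => decide (x ∉ forbidden)).take c
    placed.map (fun x => (x, y)) ++ rflushAux ν rest (y + 1) (forbidden ++ placed.dropLast)

/-- Right-flushing map `R`. -/
def Rflush (ν μ : List Bool) : Set (ℕ × ℕ) :=
  {p | p ∈ rflushAux ν ((List.range (northSteps ν + 1)).map (pointsAtHeight μ)) 0 []}

def lflushAux (m : ℕ) : List ℕ → ℕ → List ℕ → List (ℕ × ℕ)
  | [], _, _ => []
  | c :: rest, y, forbidden =>
    let placed := ((List.range (m + 1)).filter fun x => decide (x ∉ forbidden)).take c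
    placed.map (fun x => (x, y)) ++ lflushAux m rest (y + 1) (forbidden ++ placed.dropLast)

noncomputable def rowCount (T : Set (ℕ × ℕ)) (y : ℕ) : ℕ := {x | (x, y) ∈ T}.ncard

/-- Left-flushing map `L`. -/
noncomputable def Lflush (ν : List Bool) (T : Set (ℕ × ℕ)) : Set (ℕ × ℕ) :=
  {p | p ∈ lflushAux (eastSteps ν) ((List.range (northSteps ν + 1)).map (rowCount T)) 0 []}

def pathPointSet (μ : List Bool) : Set (ℕ × ℕ) := {p | ∃ i ≤ μ.length, pointAt μ i = p}

/-! Bracket vectors (0-indexed positions `0,…,ℓ`). -/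

noncomputable def fpos (ν : List Bool) (k : ℕ) : ℕ :=
  sSup {i | i ≤ ν.length ∧ (ν.take i).count true = k}

def bmin (ν : List Bool) : List ℕ :=
  (List.range (ν.length + 1)).map fun i => (ν.take i).count true

def IsBracketVector (ν : List Bool) (b : List ℕ) : Prop :=
  b.length = ν.length + 1 ∧
    (∀ k ≤ northSteps ν, b.getD (fpos ν k) 0 = k) ∧
    (∀ i < b.length, (bmin ν).getD i 0 ≤ b.getD i 0 ∧ b.getD i 0 ≤ northSteps ν) ∧
    ∀ i j k, i < j → j < k → k < b.length →
      ¬(b.getD i 0 = b.getD k 0 ∧ b.getD i 0 < b.getD j 0)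

noncomputable def leftChild (T : Set (ℕ × ℕ)) (p : ℕ × ℕ) : Option (ℕ × ℕ) :=
  if ∃ b, (p.1, b) ∈ T ∧ b < p.2 then some (p.1, sSup {b | (p.1, b) ∈ T ∧ b < p.2})
  else none

noncomputable def rightChild (T : Set (ℕ × ℕ)) (p : ℕ × ℕ) : Option (ℕ × ℕ) :=
  if ∃ a, (a, p.2) ∈ T ∧ p.1 < a then
    if ∃ b, (sInf {a | (a, p.2) ∈ T ∧ p.1 < a}, b) ∈ T ∧ p.2 < b then none
    else some (sInf {a | (a, p.2) ∈ T ∧ p.1 < a}, p.2)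
  else none

noncomputable def inorderAux (T : Set (ℕ × ℕ)) : ℕ → ℕ × ℕ → List (ℕ × ℕ)
  | 0, _ => []
  | fuel + 1, p =>
    (match leftChild T p with
      | none => []
      | some l => inorderAux T fuel l) ++ p ::
      (match rightChild T p with
        | none => []
        | some r => inorderAux T fuel r)

/-- Bracket vector of a ν-tree: y-coordinates read in in-order from the root `(0,n)`. -/
noncomputable def bracketOfTree (ν : List Bool) (T : Set (ℕ × ℕ)) : List ℕ :=
  (inorderAux T T.ncard (0, northSteps ν)).map Prod.snd

noncomputable def bracketAssign (ν μ : List Bool) : List (ℕ × ℕ) :=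
  ((List.range (northSteps ν + 1)).foldl
    (fun (st : List (ℕ × ℕ) × List ℕ) k =>
      let picked := ((st.2.filter fun i => decide (i ≤ fpos ν k)).reverse).take
        (pointsAtHeight μ k)
      (st.1 ++ picked.map fun i => (i, k), st.2.filter fun i => decide (i ∉ picked)))
    ([], List.range (ν.length + 1))).1

/-- Bracket vector of a ν-path. -/
noncomputable def bracketOfPath (ν μ : List Bool) : List ℕ :=
  (List.range (ν.length + 1)).map fun i => ((bracketAssign ν μ).lookup i).getD 0

/-- Componentwise order on (equal length) integer vectors. -/
def listLE (b b' : List ℕ) : Prop :=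
  b.length = b'.length ∧ ∀ i, b.getD i 0 ≤ b'.getD i 0

/-! Reversal -/

def revPath (ν : List Bool) : List Bool := ν.reverse.map fun s => !s

def revTree (ν : List Bool) (T : Set (ℕ × ℕ)) : Set (ℕ × ℕ) :=
  (fun p : ℕ × ℕ => (northSteps ν - p.2, eastSteps ν - p.1)) '' T

/-! Pipe dreams and subword complexes -/

def dOf (ν : List Bool) (p : ℕ × ℕ) : ℕ := p.1 + (northSteps ν - p.2)

def labelPerm (ν : List Bool) (p : ℕ × ℕ) : Equiv.Perm ℕ :=
  Equiv.swap (dOf ν p + 1) (dOf ν p + 2)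

/-- The points of `A_ν` in reading order: rows from bottom to top, each left to right. -/
def readingList (ν : List Bool) : List (ℕ × ℕ) :=
  ((List.range (northSteps ν + 1)).map fun y =>
    ((List.range (eastSteps ν + 1)).filter fun x => decide (heightAt ν x ≤ y)).map
      fun x => (x, y)).flatten

/-- The minimal ν-tree. -/
def TminSet (ν : List Bool) : Set (ℕ × ℕ) :=
  {p | p ∈ APts ν ∧ (p.1 = 0 ∨ ∃ i < ν.length, ν.getD i true = false ∧ p = pointAt ν (i + 1))}

noncomputable def prodOver (ν : List Bool) (C : Set (ℕ × ℕ)) : Equiv.Perm ℕ :=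
  (((readingList ν).filter fun p => decide (p ∈ C)).map (labelPerm ν)).prod

/-- Coxeter length: number of inversions. -/
noncomputable def lenInv (π : Equiv.Perm ℕ) : ℕ :=
  {q : ℕ × ℕ | q.1 < q.2 ∧ π q.2 < π q.1}.ncard

noncomputable def piNu (ν : List Bool) : Equiv.Perm ℕ := prodOver ν (APts ν \ TminSet ν)

def Qword (ν : List Bool) : List (Equiv.Perm ℕ) := (readingList ν).map (labelPerm ν)

noncomputable def prodAt (Q : List (Equiv.Perm ℕ)) (P : Finset ℕ) : Equiv.Perm ℕ :=
  (((List.range Q.length).filter fun i => decide (i ∈ P)).map fun i => Q.getD i 1).prod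

def IsFacet (Q : List (Equiv.Perm ℕ)) (π : Equiv.Perm ℕ) (I : Finset ℕ) : Prop :=
  I ⊆ Finset.range Q.length ∧
    prodAt Q (Finset.range Q.length \ I) = π ∧
    (Finset.range Q.length \ I).card = lenInv π

def IncFlip (Q : List (Equiv.Perm ℕ)) (π : Equiv.Perm ℕ) (I J : Finset ℕ) : Prop :=
  IsFacet Q π I ∧ IsFacet Q π J ∧ ∃ i ∈ I, ∃ j ∈ J, i < j ∧ I.erase i = J.erase j

def FlipLE (Q : List (Equiv.Perm ℕ)) (π : Equiv.Perm ℕ) : Finset ℕ → Finset ℕ → Prop :=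
  Relation.ReflTransGen (IncFlip Q π)

/-- The maximal ν-tree. -/
def TmaxSet (ν : List Bool) : Set (ℕ × ℕ) :=
  {p | (p.1 ≤ eastSteps ν ∧ p.2 = northSteps ν) ∨ ∃ i < ν.length, ν.getD i false = true ∧ p = pointAt ν i}

theorem heightAt_le_north (ν : List Bool) : ∀ x, heightAt ν x ≤ northSteps ν := by
  induction ν with
  | nil => intro x; cases x <;> simp [heightAt]
  | cons s t ih =>
    intro x
    cases x with
    | zero => cases s <;> simp [heightAt]
    | succ x =>
      cases s
      · have := ih x
        simpa [heightAt, northSteps] using this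
      · have := ih (x + 1)
        simpa [heightAt, northSteps] using this

theorem heightAt_zero (ν : List Bool) : heightAt ν 0 = 0 := by
  cases ν <;> simp [heightAt]

theorem exists_greatest (P : ℕ → Prop) (k N : ℕ) (hk : P k) (hN : ∀ a, P a → a ≤ N) :
    ∃ a, P a ∧ ∀ a', P a' → a' ≤ a :=
  ⟨Nat.findGreatest P N, Nat.findGreatest_spec (hN k hk) hk,
    fun a' h => Nat.le_findGreatest (hN a' h) h⟩

theorem exists_least (P : ℕ → Prop) (k : ℕ) (hk : P k) :
    ∃ a, P a ∧ ∀ a', P a' → a ≤ a' :=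
  ⟨Nat.find ⟨k, hk⟩, Nat.find_spec ⟨k, hk⟩, fun _ h => Nat.find_min' ⟨k, hk⟩ h⟩

/-- Pairwise compatibility in terms of corners. -/
theorem pairwise_iff_corner (ν : List Bool) (T : Set (ℕ × ℕ)) :
    T.Pairwise (Compatible ν) ↔
      ∀ a y x b, (a, y) ∈ T → (x, b) ∈ T → a < x → y < b → (x, y) ∉ APts ν := by
  constructor
  · intro h a y x b h1 h2 hax hyb hA
    exact h h1 h2 (by simp; omega) (Or.inl ⟨hax, hyb, hA⟩)
  · rintro h ⟨a, y⟩ h1 ⟨x, b⟩ h2 - (⟨u, v, w⟩ | ⟨u, v, w⟩)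
    · exact h _ _ _ _ h1 h2 u v w
    · exact h _ _ _ _ h2 h1 u v w

/-- A compatible set is maximal iff every other point has a blocker. -/
theorem nuTree_blocker (ν : List Bool) (T : Set (ℕ × ℕ)) (hT : IsNuTree ν T)
    (x y : ℕ) (hA : (x, y) ∈ APts ν) (hn : (x, y) ∉ T) :
    (∃ a b, (a, b) ∈ T ∧ a < x ∧ b < y ∧ (x, b) ∈ APts ν) ∨
    (∃ a b, (a, b) ∈ T ∧ x < a ∧ y < b ∧ (a, y) ∈ APts ν) := by
  by_contra hc
  push Not at hc
  obtain ⟨h1, h2⟩ := hc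
  obtain ⟨hs, hp, hm⟩ := hT
  apply hn
  have := hm (insert (x, y) T) (Set.insert_subset hA hs) ?_ (Set.subset_insert _ _)
  · rw [← this]; exact Set.mem_insert _ _
  · rw [pairwise_iff_corner] at hp ⊢
    intro a c d b ha hb hlt hlt2 hAA
    rw [Set.mem_insert_iff] at ha hb
    rcases ha with ha | ha <;> rcases hb with hb | hb
    · simp only [Prod.mk.injEq] at ha hb; omega
    · simp only [Prod.mk.injEq] at ha
      obtain ⟨rfl, rfl⟩ := ha
      exact h2 _ _ hb hlt hlt2 hAA
    · simp only [Prod.mk.injEq] at hb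
      obtain ⟨rfl, rfl⟩ := hb
      exact h1 _ _ ha hlt hlt2 hAA
    · exact hp _ _ _ _ ha hb hlt hlt2 hAA

theorem nuTree_iff_noncrossing_treelike (ν : List Bool) (T : Set (ℕ × ℕ))
    (hsub : T ⊆ APts ν) :
    IsNuTree ν T ↔
      ((0, northSteps ν) ∈ T ∧
       (∀ p ∈ T, p ≠ (0, northSteps ν) →
         Xor' (∃ b, p.2 < b ∧ (p.1, b) ∈ T) (∃ a, a < p.1 ∧ (a, p.2) ∈ T)) ∧
       (∀ y ≤ northSteps ν, ∃ x, (x, y) ∈ T) ∧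
       (∀ x ≤ eastSteps ν, ∃ y, (x, y) ∈ T) ∧
       (∀ p ∈ APts ν, p ∉ T →
         ¬((∃ b, p.2 < b ∧ (p.1, b) ∈ T) ∧ (∃ a, a < p.1 ∧ (a, p.2) ∈ T)))) := by
  have bd : ∀ x y, (x, y) ∈ T → x ≤ eastSteps ν ∧ heightAt ν x ≤ y ∧ y ≤ northSteps ν :=
    fun x y h => hsub h
  have memA : ∀ x y, (x, y) ∈ APts ν ↔
    (x ≤ eastSteps ν ∧ heightAt ν x ≤ y ∧ y ≤ northSteps ν) := fun x y => Iff.rfl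
  have h0 := heightAt_zero ν
  have hle := heightAt_le_north ν
  constructor
  · intro hT
    have hc := (pairwise_iff_corner ν T).1 hT.2.1
    have hbl := nuTree_blocker ν T hT
    have hroot : (0, northSteps ν) ∈ T := by
      by_contra hn
      rcases hbl 0 (northSteps ν) ((memA _ _).2 (by omega)) hn with
        ⟨a, b, h1, h2, h3, h4⟩ | ⟨a, b, h1, h2, h3, h4⟩
      · omega
      · have := bd _ _ h1; omega
    refine ⟨hroot, ?_, ?_, ?_, ?_⟩
    · rintro ⟨x, y⟩ hp hne
      have hpb := bd _ _ hp
      have hnot : ¬ ((∃ b, y < b ∧ (x, b) ∈ T) ∧ (∃ a, a < x ∧ (a, y) ∈ T)) := by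
        rintro ⟨⟨b, hb, hbT⟩, ⟨a, ha, haT⟩⟩
        exact hc _ _ _ _ haT hbT ha hb (hsub hp)
      have hor : (∃ b, y < b ∧ (x, b) ∈ T) ∨ (∃ a, a < x ∧ (a, y) ∈ T) := by
        by_contra hcon
        push Not at hcon
        obtain ⟨hu, hl⟩ := hcon
        have hx : 0 < x := by
          rcases Nat.eq_zero_or_pos x with rfl | h
          · have : y ≠ northSteps ν := by rintro rfl; exact hne rfl
            exact absurd hroot (hu _ (by omega))
          · exact h
        have hy : y < northSteps ν := by
          by_contra hy
          have : y = northSteps ν := by omega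
          subst this
          exact hl 0 hx hroot
        obtain ⟨a, ⟨hax, haA, b, hyb, hab⟩, hmax⟩ := exists_greatest
          (fun a => a < x ∧ (a, y) ∈ APts ν ∧ ∃ b, y < b ∧ (a, b) ∈ T) 0 x
          ⟨hx, (memA _ _).2 (by omega), _, hy, hroot⟩ (fun a h => h.1.le)
        rcases hbl a y haA (hl a hax) with ⟨c, d, h1, h2, h3, h4⟩ | ⟨c, d, h1, h2, h3, h4⟩
        · exact hc _ _ _ _ h1 hab h2 (by omega) h4
        · rcases lt_trichotomy c x with h | h | h
          · have := hmax c ⟨h, h4, d, h3, h1⟩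
            omega
          · subst h
            exact hu d h3 h1
          · exact hc _ _ _ _ hp h1 h h3 h4
      rcases hor with h | h
      · exact Or.inl ⟨h, fun h' => hnot ⟨h, h'⟩⟩
      · exact Or.inr ⟨h, fun h' => hnot ⟨h', h⟩⟩
    · intro y hy
      obtain ⟨x, ⟨hxA, hx⟩, hmax⟩ := exists_greatest
        (fun x => (x, y) ∈ APts ν ∧ (x = 0 ∨ ∃ b, y < b ∧ (x, b) ∈ T)) 0 (eastSteps ν)
        ⟨(memA _ _).2 (by omega), Or.inl rfl⟩ (fun a h => h.1.1)
      refine ⟨x, ?_⟩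
      by_contra hn
      rcases hbl x y hxA hn with ⟨c, d, h1, h2, h3, h4⟩ | ⟨c, d, h1, h2, h3, h4⟩
      · rcases hx with rfl | ⟨b, hyb, hb⟩
        · omega
        · exact hc _ _ _ _ h1 hb h2 (by omega) h4
      · have := hmax c ⟨h4, Or.inr ⟨d, h3, h1⟩⟩
        omega
    · intro x hx
      obtain ⟨y, ⟨hyA, hy⟩, hmin⟩ := exists_least
        (fun y => (x, y) ∈ APts ν ∧ (y = northSteps ν ∨ ∃ a, a < x ∧ (a, y) ∈ T))
        (northSteps ν) ⟨(memA _ _).2 ⟨hx, hle x, le_rfl⟩, Or.inl rfl⟩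
      refine ⟨y, ?_⟩
      by_contra hn
      rcases hbl x y hyA hn with ⟨c, d, h1, h2, h3, h4⟩ | ⟨c, d, h1, h2, h3, h4⟩
      · have := hmin d ⟨h4, Or.inr ⟨c, h2, h1⟩⟩
        omega
      · rcases hy with rfl | ⟨a, hax, ha⟩
        · have := bd _ _ h1
          omega
        · exact hc _ _ _ _ ha h1 (by omega) h3 h4
    · rintro ⟨x, y⟩ hp - ⟨⟨b, hb, hbT⟩, ⟨a, ha, haT⟩⟩
      exact hc _ _ _ _ haT hbT ha hb hp
  · rintro ⟨hroot, hxor, hrow, hcol, hnc⟩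
    have hc : ∀ a y x b, (a, y) ∈ T → (x, b) ∈ T → a < x → y < b → (x, y) ∉ APts ν := by
      intro a y x b h1 h2 hax hyb hA
      by_cases hT : (x, y) ∈ T
      · rcases hxor (x, y) hT (by simp; omega) with ⟨-, h⟩ | ⟨-, h⟩
        · exact h ⟨a, hax, h1⟩
        · exact h ⟨b, hyb, h2⟩
      · exact hnc (x, y) hA hT ⟨⟨b, hyb, h2⟩, ⟨a, hax, h1⟩⟩
    refine ⟨hsub, (pairwise_iff_corner ν T).2 hc, ?_⟩
    intro T' hs' hp' hTT'
    refine Set.Subset.antisymm ?_ hTT'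
    rintro ⟨x, y⟩ hp
    by_contra hn
    have hc' := (pairwise_iff_corner ν T').1 hp'
    have hpA := (memA _ _).1 (hs' hp)
    by_cases hu : ∃ b, y < b ∧ (x, b) ∈ T
    · have hl : ¬ ∃ a, a < x ∧ (a, y) ∈ T := fun h => hnc (x, y) (hs' hp) hn ⟨hu, h⟩
      obtain ⟨a₀, ha₀⟩ := hrow y hpA.2.2
      obtain ⟨a, ha, hmin⟩ := exists_least (fun a => (a, y) ∈ T) a₀ ha₀
      have hxa : x < a := by
        rcases lt_trichotomy x a with h | h | h
        · exact h
        · subst h; exact absurd ha hn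
        · exact absurd ⟨a, h, ha⟩ hl
      rcases hxor (a, y) ha (by simp; omega) with ⟨⟨b, hb, hbT⟩, -⟩ | ⟨⟨c, hcl, hcT⟩, -⟩
      · exact hc' _ _ _ _ hp (hTT' hbT) hxa hb (hsub ha)
      · have := hmin c hcT
        simp only at hcl
        omega
    · obtain ⟨b₀, hb₀⟩ := hcol x hpA.1
      obtain ⟨b, hb, hmax⟩ := exists_greatest (fun b => (x, b) ∈ T) b₀ (northSteps ν) hb₀
        (fun b h => (bd _ _ h).2.2)
      have hby : b < y := by
        rcases lt_trichotomy b y with h | h | h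
        · exact h
        · subst h; exact absurd hb hn
        · exact absurd ⟨b, h, hb⟩ hu
      rcases hxor (x, b) hb (by simp; omega) with ⟨⟨c, hcl, hcT⟩, -⟩ | ⟨⟨c, hcl, hcT⟩, -⟩
      · have := hmax c hcT
        simp only at hcl
        omega
      · exact hc' _ _ _ _ (hTT' hcT) hp hcl hby (hsub hb)
end

section
/- Let ν be a lattice path with m east and n north steps, and let T_max be the subset of A_ν consisting of all points of the top row (y = n) together with the starting points of all north steps of ν. Then every ν-tree can be transformed into T_max by a finite sequence of right rotations; in particular, every ν-tree has exactly m + n + 1 elements, the number of lattice points on ν. -/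
open scoped Classical

/-- Unfolded form of the notion of a `ν`-tree, for a height function `h`. -/
structure GoodTree (m n : ℕ) (h : ℕ → ℕ) (T : Set (ℕ × ℕ)) : Prop where
  sub : ∀ a b, (a, b) ∈ T → a ≤ m ∧ h a ≤ b ∧ b ≤ n
  comp : ∀ a b c d, (a, b) ∈ T → (c, d) ∈ T → a < c → b < d → h c ≤ b → False
  max : ∀ a b, a ≤ m → h a ≤ b → b ≤ n →
    (∀ c d, (c, d) ∈ T → a < c → b < d → h c ≤ b → False) →
    (∀ c d, (c, d) ∈ T → c < a → d < b → h a ≤ d → False) → (a, b) ∈ T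

theorem goodTree_of_isNuTree (ν : List Bool) (T : Set (ℕ × ℕ)) (hT : IsNuTree ν T) :
    GoodTree (eastSteps ν) (northSteps ν) (heightAt ν) T := by
  obtain ⟨h1, h2, h3⟩ := hT
  have hs : ∀ a b, (a, b) ∈ T → a ≤ eastSteps ν ∧ heightAt ν a ≤ b ∧ b ≤ northSteps ν :=
    fun a b hab => h1 hab
  refine ⟨hs, ?_, ?_⟩
  · intro a b c d hab hcd hac hbd hh
    refine h2 hab hcd (by simp; omega) (Or.inl ⟨hac, hbd, ?_⟩)
    exact ⟨(hs c d hcd).1, hh, (hs a b hab).2.2⟩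
  · intro a b ha hb hbn k1 k2
    have := h3 (insert (a, b) T) ?_ ?_ (Set.subset_insert _ _)
    · rw [← this]; exact Set.mem_insert _ _
    · intro p hp
      rcases hp with rfl | hp
      · exact ⟨ha, hb, hbn⟩
      · exact h1 hp
    · apply Set.Pairwise.insert h2
      rintro ⟨c, d⟩ hcd -
      constructor
      · rintro (⟨u, v, w⟩ | ⟨u, v, w⟩)
        · exact k1 c d hcd u v w.2.1
        · exact k2 c d hcd u v w.2.1
      · rintro (⟨u, v, w⟩ | ⟨u, v, w⟩)
        · exact k2 c d hcd u v w.2.1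
        · exact k1 c d hcd u v w.2.1

theorem GoodTree.finite {m n : ℕ} {h : ℕ → ℕ} {T : Set (ℕ × ℕ)} (hT : GoodTree m n h T) :
    T.Finite := by
  apply (Set.finite_Iic ((m, n) : ℕ × ℕ)).subset
  rintro ⟨a, b⟩ hab
  exact ⟨(hT.sub a b hab).1, (hT.sub a b hab).2.2⟩

theorem GoodTree.rotate {m n : ℕ} {h : ℕ → ℕ} (hm : Monotone h) {T : Set (ℕ × ℕ)}
    (hT : GoodTree m n h T) {x y x2 y2 : ℕ} (hx : x < x2) (hy : y < y2)
    (hq : (x, y) ∈ T) (hp : (x, y2) ∈ T) (hr : (x2, y) ∈ T)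
    (e1 : ∀ b, y < b → b < y2 → (x, b) ∉ T) (e2 : ∀ a, x < a → a < x2 → (a, y) ∉ T) :
    (x2, y2) ∉ T ∧ IsRightRotation T ((T \ {(x, y)}) ∪ {(x2, y2)}) ∧
    GoodTree m n h ((T \ {(x, y)}) ∪ {(x2, y2)}) := by
  have hr' := hT.sub _ _ hr
  have hp' := hT.sub _ _ hp
  have hq' := hT.sub _ _ hq
  have key : ∀ c d, (c, d) ∈ T → (c, d) ≠ (x, y) → 
      (x2 < c → y2 < d → h c ≤ y2 → False) ∧ (c < x2 → d < y2 → h x2 ≤ d → False) := by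
    intro c d hcd hne
    refine ⟨fun u v w => hT.comp x y2 c d hp hcd (by omega) v w, fun u v w => ?_⟩
    have b1 : y ≤ d := by
      by_contra hlt
      exact hT.comp c d x2 y hcd hr u (by omega) w
    have b2 : x ≤ c := by
      by_contra hlt
      exact hT.comp c d x y2 hcd hp (by omega) v ((hm hx.le).trans w)
    rcases b2.eq_or_lt with rfl | b2
    · rcases b1.eq_or_lt with rfl | b1
      · exact hne rfl
      · exact e1 d b1 v hcd
    · rcases b1.eq_or_lt with rfl | b1
      · exact e2 c b2 u hcd
      · exact hT.comp x y c d hq hcd b2 b1 ((hm u.le).trans hr'.2.1)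
  refine ⟨fun hh => hT.comp x y x2 y2 hq hh hx hy hr'.2.1, ?_, ?_, ?_, ?_⟩
  · refine ⟨_, _, x, y, x2, y2, rfl, rfl, hx, hy, hq, hp, hr, e1, e2, ?_, ?_, rfl⟩
    · intro a u v ha
      exact hT.comp x y a y2 hq ha u hy ((hm v.le).trans hr'.2.1)
    · intro b u v hb
      exact hT.comp x y x2 b hq hb hx u hr'.2.1
  · rintro a b (⟨hab, -⟩ | hab)
    · exact hT.sub a b hab
    · simp only [Set.mem_singleton_iff, Prod.mk.injEq] at hab
      obtain ⟨rfl, rfl⟩ := hab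
      omega
  · rintro a b c d (⟨hab, h1⟩ | hab) (⟨hcd, h2⟩ | hcd) hac hbd hh
    · exact hT.comp a b c d hab hcd hac hbd hh
    · simp only [Set.mem_singleton_iff, Prod.mk.injEq] at hcd
      obtain ⟨rfl, rfl⟩ := hcd
      exact (key a b hab h1).2 hac hbd hh
    · simp only [Set.mem_singleton_iff, Prod.mk.injEq] at hab
      obtain ⟨rfl, rfl⟩ := hab
      exact (key c d hcd h2).1 hac hbd hh
    · simp only [Set.mem_singleton_iff, Prod.mk.injEq] at hab hcd
      omega
  · intro a b ha hab hb k1 k2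
    have hin : ∀ c d, (c, d) ∈ T → (c ≠ x ∨ d ≠ y) →
        (c, d) ∈ (T \ {(x, y)}) ∪ {(x2, y2)} := by
      intro c d hcd hne
      refine Or.inl ⟨hcd, ?_⟩
      simp only [Set.mem_singleton_iff, Prod.mk.injEq]
      omega
    have hq2 : (x2, y2) ∈ (T \ {(x, y)}) ∪ {(x2, y2)} := Or.inr rfl
    have hp2 := hin x y2 hp (by omega)
    have hr2 := hin x2 y hr (by omega)
    by_cases hfin : a = x2 ∧ b = y2
    · rw [hfin.1, hfin.2]; exact hq2
    -- the point is not strictly north-east of the rotated point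
    have n1 : x < a → y < b → h a ≤ y → False := by
      intro u v w
      have b1 : b ≤ y2 := by
        by_contra hlt
        exact k2 x y2 hp2 u (by omega) (by omega)
      have b2 : a ≤ x2 := by
        by_contra hlt
        exact k2 x2 y hr2 (by omega) v w
      have b3 : a = x2 ∨ b = y2 := by
        by_contra hne
        exact k1 x2 y2 hq2 (by omega) (by omega) (by omega)
      rcases b3 with rfl | rfl
      · have hb2 : b < y2 := by omega
        refine e1 b v hb2 (hT.max x b (by omega) (by omega) hb ?_ ?_)
        · intro c d hcd s1 s2 s3
          by_cases s4 : h c ≤ y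
          · exact hT.comp x y c d hq hcd s1 (by omega) s4
          · have s5 : a < c := by
              by_contra hle
              exact s4 ((hm (not_lt.mp hle)).trans w)
            exact k1 c d (hin c d hcd (by omega)) s5 s2 s3
        · intro c d hcd s1 s2 s3
          exact hT.comp c d x y2 hcd hp s1 (by omega) s3
      · have ha2 : a < x2 := by omega
        refine e2 a u ha2 (hT.max a y (by omega) w (by omega) ?_ ?_)
        · intro c d hcd s1 s2 s3
          exact hT.comp x y c d hq hcd (by omega) s2 s3
        · intro c d hcd s1 s2 s3
          exact k2 c d (hin c d hcd (by omega)) s1 (by omega) s3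
    have n2 : a < x → b < y → h x ≤ b → False := by
      intro u v w
      exact k1 x y2 hp2 u (by omega) w
    have hne : a ≠ x ∨ b ≠ y := by
      by_contra hc
      push Not at hc
      obtain ⟨rfl, rfl⟩ := hc
      exact k1 x2 y2 hq2 hx hy hr'.2.1
    refine hin a b (hT.max a b ha hab hb ?_ ?_) hne
    · intro c d hcd s1 s2 s3
      by_cases hc : c = x ∧ d = y
      · obtain ⟨rfl, rfl⟩ := hc
        exact n2 s1 s2 s3
      · exact k1 c d (hin c d hcd (by omega)) s1 s2 s3
    · intro c d hcd s1 s2 s3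
      by_cases hc : c = x ∧ d = y
      · obtain ⟨rfl, rfl⟩ := hc
        exact n1 s1 s2 s3
      · exact k2 c d (hin c d hcd (by omega)) s1 s2 s3

theorem GoodTree.exists_above {m n : ℕ} {h : ℕ → ℕ} {T : Set (ℕ × ℕ)}
    (hT : GoodTree m n h T) {x y : ℕ} (hq : (x, y) ∈ T) (hy : y < n)
    (hleft : ∀ c, c < x → (c, y) ∉ T) : ∃ b, y < b ∧ (x, b) ∈ T := by
  have hq' := hT.sub _ _ hq
  have low : ∀ c d, (c, d) ∈ T → c < x → h x ≤ d → y < d := by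
    intro c d hcd u v
    rcases lt_trichotomy d y with hd | rfl | hd
    · exact (hT.comp c d x y hcd hq u hd v).elim
    · exact (hleft c u hcd).elim
    · exact hd
  by_cases hex : ∃ d, y < d ∧ ∃ c, c < x ∧ (c, d) ∈ T
  · obtain ⟨hd, c, hc, hcd⟩ := Nat.find_spec hex
    have hmin := fun k hk => Nat.find_min hex (m := k) hk
    generalize Nat.find hex = d at *
    have hcd' := hT.sub _ _ hcd
    refine ⟨d, hd, hT.max x d hq'.1 (by omega) (by omega) ?_ ?_⟩
    · intro e f hef s1 s2 s3
      exact hT.comp c d e f hcd hef (by omega) s2 s3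
    · intro e f hef s1 s2 s3
      exact hmin f s2 ⟨low e f hef s1 s3, e, s1, hef⟩
  · refine ⟨n, hy, hT.max x n hq'.1 (by omega) le_rfl ?_ ?_⟩
    · intro e f hef s1 s2 s3
      have := hT.sub _ _ hef
      omega
    · intro e f hef s1 s2 s3
      exact hex ⟨f, low e f hef s1 s3, e, s1, hef⟩

/-- If some point of the tree is neither in the top row nor last in its row, we can rotate. -/
theorem GoodTree.exists_rotation {m n : ℕ} {h : ℕ → ℕ} (hm : Monotone h)
    (hbig : ∀ x, m < x → h x = n) {T : Set (ℕ × ℕ)}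
    (hT : GoodTree m n h T) (hbad : ∃ y x, (x, y) ∈ T ∧ y < n ∧ h (x + 1) ≤ y) :
    ∃ x y x2 y2, x < x2 ∧ y < y2 ∧ (x, y) ∈ T ∧ (x2, y2) ∉ T ∧
      IsRightRotation T ((T \ {(x, y)}) ∪ {(x2, y2)}) ∧
      GoodTree m n h ((T \ {(x, y)}) ∪ {(x2, y2)}) := by
  have hs := Nat.find_spec hbad
  have hmin := fun k hk => Nat.find_min hbad (m := k) hk
  generalize Nat.find hbad = y at *
  have hs2 := Nat.find_spec hs
  have hmin2 := fun k hk => Nat.find_min hs (m := k) hk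
  generalize Nat.find hs = x at *
  obtain ⟨hq, hyn, hxy⟩ := hs2
  have hq' := hT.sub _ _ hq
  have habove := hT.exists_above hq hyn (fun c hc hcy =>
    hmin2 c hc ⟨hcy, hyn, (hm (by omega)).trans hxy⟩)
  have hright : ∃ a, x < a ∧ (a, y) ∈ T := by
    have hP : h (x + 1) ≤ y := hxy
    have hxm : x + 1 ≤ m := by
      by_contra hlt
      have := hbig (x + 1) (by omega)
      omega
    have hR1 := Nat.findGreatest_spec (P := fun a => h a ≤ y) hxm hP
    have hR2 := Nat.le_findGreatest (P := fun a => h a ≤ y) hxm hP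
    have hR3 := Nat.findGreatest_le (P := fun a => h a ≤ y) m
    have hR4 := fun k => Nat.findGreatest_is_greatest (P := fun a => h a ≤ y) (n := m) (k := k)
    generalize Nat.findGreatest (fun a => h a ≤ y) m = R at *
    refine ⟨R, by omega, hT.max R y hR3 hR1 hyn.le ?_ ?_⟩
    · intro c d hcd s1 s2 s3
      exact hR4 c s1 (hT.sub _ _ hcd).1 s3
    · intro c d hcd s1 s2 s3
      exact hmin d s2 ⟨c, hcd, by omega, (hm (by omega : c + 1 ≤ R)).trans s3⟩
  have ha := Nat.find_spec habove
  have ha2 := fun k hk => Nat.find_min habove (m := k) hk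
  generalize Nat.find habove = y2 at *
  have hr := Nat.find_spec hright
  have hr2 := fun k hk => Nat.find_min hright (m := k) hk
  generalize Nat.find hright = x2 at *
  exact ⟨x, y, x2, y2, hr.1, ha.1, hq, hT.rotate hm hr.1 ha.1 hq ha.2 hr.2
    (fun b u v hb => ha2 b v ⟨u, hb⟩) (fun a u v hb => hr2 a v ⟨u, hb⟩)⟩

/-- Abstract description of the maximal tree. -/
def lastPts (m n : ℕ) (h : ℕ → ℕ) : Set (ℕ × ℕ) :=
  {p | p.1 ≤ m ∧ h p.1 ≤ p.2 ∧ p.2 ≤ n ∧ (p.2 < n → p.2 < h (p.1 + 1))}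

theorem GoodTree.eq_lastPts {m n : ℕ} {h : ℕ → ℕ} (hm : Monotone h) {T : Set (ℕ × ℕ)}
    (hT : GoodTree m n h T) (hbad : ¬ ∃ y x, (x, y) ∈ T ∧ y < n ∧ h (x + 1) ≤ y) :
    T = lastPts m n h := by
  have hsub : T ⊆ lastPts m n h := by
    rintro ⟨x, y⟩ hxy
    obtain ⟨h1, h2, h3⟩ := hT.sub _ _ hxy
    refine ⟨h1, h2, h3, fun h4 => ?_⟩
    by_contra h5
    exact hbad ⟨y, x, hxy, h4, not_lt.mp h5⟩
  apply hsub.antisymm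
  rintro ⟨x, y⟩ ⟨h1, h2, h3, h4⟩
  simp only at h1 h2 h3 h4
  refine hT.max x y h1 h2 h3 ?_ ?_
  · intro c d hcd s1 s2 s3
    have := hT.sub _ _ hcd
    have := h4 (by omega)
    have := hm (show x + 1 ≤ c by omega)
    omega
  · intro c d hcd s1 s2 s3
    have := (hsub hcd).2.2.2
    simp only at this
    have := this (by omega)
    have := hm (show c + 1 ≤ x by omega)
    omega

/-- The set as a finset. -/
noncomputable def treeFinset (m n : ℕ) (T : Set (ℕ × ℕ)) : Finset (ℕ × ℕ) :=
  (Finset.Iic (m, n)).filter (· ∈ T)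

/-- Sum of all coordinates, the potential that increases under right rotations. -/
noncomputable def potential (m n : ℕ) (T : Set (ℕ × ℕ)) : ℕ :=
  ∑ p ∈ treeFinset m n T, (p.1 + p.2)

theorem potential_le (m n : ℕ) (T : Set (ℕ × ℕ)) :
    potential m n T ≤ ∑ p ∈ Finset.Iic (m, n), (p.1 + p.2) :=
  Finset.sum_le_sum_of_subset (Finset.filter_subset _ _)

theorem potential_lt {m n x y x2 y2 : ℕ} {T : Set (ℕ × ℕ)} (hx : x < x2) (hy : y < y2)
    (hxm : x2 ≤ m) (hyn : y2 ≤ n) (hq : (x, y) ∈ T) (hq2 : (x2, y2) ∉ T) :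
    potential m n T < potential m n ((T \ {(x, y)}) ∪ {(x2, y2)}) := by
  have key : treeFinset m n ((T \ {(x, y)}) ∪ {(x2, y2)}) =
      insert (x2, y2) ((treeFinset m n T).erase (x, y)) := by
    ext ⟨a, b⟩
    simp only [treeFinset, Finset.mem_filter, Finset.mem_Iic, Prod.mk_le_mk, Set.mem_union, Set.mem_sdiff,
      Set.mem_singleton_iff, Finset.mem_insert, Finset.mem_erase, Prod.mk.injEq, ne_eq]
    constructor
    · tauto
    · rintro (⟨rfl, rfl⟩ | h)
      · exact ⟨⟨hxm, hyn⟩, Or.inr ⟨rfl, rfl⟩⟩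
      · tauto
  unfold potential
  rw [key, Finset.sum_insert (by simp [treeFinset, hq2]),
    ← Finset.add_sum_erase (treeFinset m n T) _ (a := (x, y))
      (by simp [treeFinset, hq]; omega)]
  simp only
  omega

theorem GoodTree.reaches {m n : ℕ} {h : ℕ → ℕ} (hm : Monotone h)
    (hbig : ∀ x, m < x → h x = n) (k : ℕ) : ∀ {T : Set (ℕ × ℕ)}, GoodTree m n h T →
    ∑ p ∈ Finset.Iic (m, n), (p.1 + p.2) ≤ k + potential m n T →
    Relation.ReflTransGen IsRightRotation T (lastPts m n h) ∧
      T.ncard = (lastPts m n h).ncard := by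
  induction k with
  | zero =>
    intro T hT hk
    by_cases hbad : ∃ y x, (x, y) ∈ T ∧ y < n ∧ h (x + 1) ≤ y
    · obtain ⟨x, y, x2, y2, hx, hy, hq, hq2, hrot, hT2⟩ := hT.exists_rotation hm hbig hbad
      have hs := hT2.sub x2 y2 (Or.inr rfl)
      have h1 := potential_lt hx hy hs.1 hs.2.2 hq hq2
      have h2 := potential_le m n ((T \ {(x, y)}) ∪ {(x2, y2)})
      omega
    · rw [hT.eq_lastPts hm hbad]
      exact ⟨Relation.ReflTransGen.refl, rfl⟩
  | succ k ih =>
    intro T hT hk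
    by_cases hbad : ∃ y x, (x, y) ∈ T ∧ y < n ∧ h (x + 1) ≤ y
    · obtain ⟨x, y, x2, y2, hx, hy, hq, hq2, hrot, hT2⟩ := hT.exists_rotation hm hbig hbad
      have hs := hT2.sub x2 y2 (Or.inr rfl)
      have h1 := potential_lt hx hy hs.1 hs.2.2 hq hq2
      obtain ⟨r1, r2⟩ := ih hT2 (by omega)
      refine ⟨Relation.ReflTransGen.head hrot r1, ?_⟩
      rw [← r2, Set.union_singleton, Set.ncard_insert_of_notMem (fun hh => hq2 hh.1)
        hT.finite.sdiff, Set.ncard_sdiff_singleton_add_one hq hT.finite]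
    · rw [hT.eq_lastPts hm hbad]
      exact ⟨Relation.ReflTransGen.refl, rfl⟩

theorem heightAt_mono (ν : List Bool) : Monotone (heightAt ν) := by
  apply monotone_nat_of_le_succ
  induction ν with
  | nil => intro x; cases x <;> simp [heightAt]
  | cons s ν ih =>
    intro x
    cases x with
    | zero => rw [heightAt_zero]; exact Nat.zero_le _
    | succ x =>
      cases s
      · simpa [heightAt] using ih x
      · simpa [heightAt] using ih (x + 1)

theorem heightAt_big (ν : List Bool) : ∀ x, eastSteps ν < x → heightAt ν x = northSteps ν := by
  induction ν with
  | nil => intro x hx; cases x <;> simp [heightAt, northSteps]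
  | cons s ν ih =>
    intro x hx
    cases x with
    | zero => omega
    | succ x =>
      cases s
      · simp only [eastSteps, northSteps, List.count_cons] at *
        simpa [heightAt] using ih x (by simpa using hx)
      · simp only [eastSteps, northSteps, List.count_cons] at *
        simpa [heightAt] using ih (x + 1) (by simpa using hx)

theorem heightAt_le (ν : List Bool) (x : ℕ) : heightAt ν x ≤ northSteps ν := by
  rw [← heightAt_big ν (max x (eastSteps ν + 1)) (by omega)]
  exact heightAt_mono ν (by omega)

theorem heightAt_north (ν : List Bool) : ∀ i < ν.length, ν.getD i false = true →
    heightAt ν ((ν.take i).count false) ≤ (ν.take i).count true ∧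
      (ν.take i).count true < heightAt ν ((ν.take i).count false + 1) := by
  induction ν with
  | nil => intro i hi; simp at hi
  | cons s ν ih =>
    intro i hi hs
    cases i with
    | zero =>
      simp at hs
      subst hs
      simp [heightAt]
    | succ i =>
      have := ih i (by simpa using hi) (by simpa using hs)
      cases s
      · simpa [heightAt] using this
      · generalize hc : (ν.take i).count false = c at *
        simp only [List.take_succ_cons, List.count_cons, hc]
        cases c with
        | zero => simpa [heightAt] using this.2
        | succ c => simpa [heightAt] using this

theorem exists_north (ν : List Bool) : ∀ y < northSteps ν, ∃ i < ν.length,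
    ν.getD i false = true ∧ (ν.take i).count true = y := by
  induction ν with
  | nil => intro y hy; simp [northSteps] at hy
  | cons s ν ih =>
    intro y hy
    cases s
    · obtain ⟨i, h1, h2, h3⟩ := ih y (by simpa [northSteps] using hy)
      exact ⟨i + 1, by simpa using h1, by simpa using h2, by simpa using h3⟩
    · cases y with
      | zero => exact ⟨0, by simp, by simp, by simp⟩
      | succ y =>
        obtain ⟨i, h1, h2, h3⟩ := ih y (by simpa [northSteps] using hy)
        exact ⟨i + 1, by simpa using h1, by simpa using h2, by simpa using h3⟩

theorem lastPts_unique {m n : ℕ} {h : ℕ → ℕ} (hm : Monotone h) {a b y : ℕ} (hy : y < n)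
    (ha : (a, y) ∈ lastPts m n h) (hb : (b, y) ∈ lastPts m n h) : a = b := by
  obtain ⟨-, a2, -, a4⟩ := ha
  obtain ⟨-, b2, -, b4⟩ := hb
  simp only at *
  have a5 := a4 hy
  have b5 := b4 hy
  rcases lt_trichotomy a b with hab | hab | hab
  · have := hm (show a + 1 ≤ b by omega)
    omega
  · exact hab
  · have := hm (show b + 1 ≤ a by omega)
    omega

theorem pointAt_mem (ν : List Bool) (i : ℕ) (hi : i < ν.length) (hs : ν.getD i false = true) :
    pointAt ν i ∈ lastPts (eastSteps ν) (northSteps ν) (heightAt ν) := by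
  have := heightAt_north ν i hi hs
  exact ⟨(List.take_sublist i ν).count_le _, this.1, (List.take_sublist i ν).count_le _,
    fun _ => this.2⟩

theorem TmaxSet_eq (ν : List Bool) :
    TmaxSet ν = lastPts (eastSteps ν) (northSteps ν) (heightAt ν) := by
  apply Set.Subset.antisymm
  · rintro ⟨x, y⟩ (⟨h1, h2⟩ | ⟨i, hi, hs, hp⟩)
    · simp only at h1 h2
      subst h2
      exact ⟨h1, heightAt_le ν x, le_rfl, fun hh => absurd hh (lt_irrefl _)⟩
    · rw [hp]
      exact pointAt_mem ν i hi hs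
  · rintro ⟨x, y⟩ hxy
    have h1 := hxy.1
    have h3 := hxy.2.2.1
    simp only at h1 h3
    rcases h3.eq_or_lt with h4 | h4
    · exact Or.inl ⟨h1, h4⟩
    · obtain ⟨i, hi, hs, hc⟩ := exists_north ν y h4
      refine Or.inr ⟨i, hi, hs, ?_⟩
      have hmem := pointAt_mem ν i hi hs
      unfold pointAt at *
      rw [hc] at hmem ⊢
      rw [lastPts_unique (heightAt_mono ν) h4 hxy hmem]

theorem lastPts_card (ν : List Bool) :
    (lastPts (eastSteps ν) (northSteps ν) (heightAt ν)).ncard =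
      eastSteps ν + northSteps ν + 1 := by
  have hex : ∀ y, ∃ x, y < northSteps ν →
      (x, y) ∈ lastPts (eastSteps ν) (northSteps ν) (heightAt ν) := by
    intro y
    by_cases hy : y < northSteps ν
    · obtain ⟨i, hi, hs, hc⟩ := exists_north ν y hy
      have hmem := pointAt_mem ν i hi hs
      unfold pointAt at hmem
      rw [hc] at hmem
      exact ⟨_, fun _ => hmem⟩
    · exact ⟨0, fun h => absurd h hy⟩
  choose R hR using hex
  have hset : lastPts (eastSteps ν) (northSteps ν) (heightAt ν) =
      ↑((Finset.range (eastSteps ν + 1)).image (fun x => (x, northSteps ν)) ∪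
        (Finset.range (northSteps ν)).image (fun y => (R y, y))) := by
    ext ⟨x, y⟩
    simp only [Finset.coe_union, Finset.coe_image, Set.mem_union, Set.mem_image, Finset.mem_coe,
      Finset.mem_range, Prod.mk.injEq]
    constructor
    · intro hxy
      have h1 := hxy.1
      have h3 := hxy.2.2.1
      simp only at h1 h3
      rcases h3.eq_or_lt with h4 | h4
      · exact Or.inl ⟨x, by omega, rfl, h4.symm⟩
      · exact Or.inr ⟨y, h4, lastPts_unique (heightAt_mono ν) h4 (hR y h4) hxy, rfl⟩
    · rintro (⟨a, ha, rfl, rfl⟩ | ⟨a, ha, rfl, rfl⟩)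
      · exact ⟨Nat.lt_succ_iff.mp ha, heightAt_le ν _, le_rfl, fun hh => absurd hh (lt_irrefl _)⟩
      · exact hR a ha
  rw [hset, Set.ncard_coe_finset, Finset.card_union_of_disjoint, Finset.card_image_of_injective,
    Finset.card_image_of_injective, Finset.card_range, Finset.card_range]
  · omega
  · intro a b hab
    exact (Prod.mk.inj hab).2
  · intro a b hab
    exact (Prod.mk.inj hab).1
  · rw [Finset.disjoint_left]
    rintro ⟨x, y⟩ h1 h2
    simp only [Finset.mem_image, Finset.mem_range, Prod.mk.injEq] at h1 h2
    obtain ⟨a, ha, -, rfl⟩ := h1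
    obtain ⟨b, hb, -, h3⟩ := h2
    omega

theorem nuTree_reaches_Tmax_and_card (ν : List Bool) (T : Set (ℕ × ℕ))
    (hT : IsNuTree ν T) :
    Relation.ReflTransGen IsRightRotation T (TmaxSet ν) ∧
      T.ncard = eastSteps ν + northSteps ν + 1 := by
  rw [TmaxSet_eq, ← lastPts_card]
  exact (goodTree_of_isNuTree ν T hT).reaches (heightAt_mono ν) (heightAt_big ν) _
    (Nat.le_add_right _ _)
end

section
/- Let ν be a lattice path and let T and T' be distinct ν-trees. Then T and T' differ by a single element (i.e., |T \ T'| = |T' \ T| = 1) if and only if one of them is obtained from the other by a right rotation. -/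
open scoped Classical

theorem heightAt_mono_aux (ν : List Bool) : ∀ x x' : ℕ, x' ≤ x → x ≤ ν.count false →
    heightAt ν x' ≤ heightAt ν x := by
  induction ν with
  | nil =>
    intro x x' h1 h2
    simp at h2
    subst h2
    have : x' = 0 := by omega
    subst this
    exact le_rfl
  | cons s rest ih =>
    intro x x' h1 h2
    cases x' with
    | zero => simp [heightAt]
    | succ x' =>
      cases x with
      | zero => omega
      | succ x =>
        cases s with
        | true =>
          simp only [heightAt]
          have h3 : x + 1 ≤ rest.count false := by simpa using h2
          have := ih (x + 1) (x' + 1) h1 h3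
          omega
        | false =>
          simp only [heightAt]
          have h3 : x + 1 ≤ rest.count false + 1 := by simpa using h2
          exact ih x x' (by omega) (by omega)

theorem APts_up_left {ν : List Bool} {x y x' y' : ℕ} (h : (x, y) ∈ APts ν) (hx : x' ≤ x)
    (hy : y ≤ y') (hn : y' ≤ northSteps ν) : (x', y') ∈ APts ν := by
  obtain ⟨h1, h2, h3⟩ := h
  have := heightAt_mono_aux ν x x' hx h1
  exact ⟨le_trans hx h1, le_trans this (le_trans h2 hy), hn⟩

theorem Compatible_symm {ν : List Bool} {p q : ℕ × ℕ} (h : Compatible ν p q) :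
    Compatible ν q p := fun hi => h (Or.symm hi)

theorem mem_of_compatible {ν : List Bool} {T : Set (ℕ × ℕ)} (hT : IsNuTree ν T) {p : ℕ × ℕ}
    (hp : p ∈ APts ν) (h : ∀ r ∈ T, Compatible ν p r) : p ∈ T := by
  obtain ⟨h1, h2, h3⟩ := hT
  have := h3 (insert p T) (Set.insert_subset hp h1)
    (h2.insert fun r hr _ => ⟨h r hr, Compatible_symm (h r hr)⟩) (Set.subset_insert _ _)
  rw [← this]
  exact Set.mem_insert _ _

theorem rotation_of_lt {ν : List Bool} {T T' : Set (ℕ × ℕ)} (hT : IsNuTree ν T)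
    (hT' : IsNuTree ν T') {x y x'' y' : ℕ} (hq : T \ T' = {(x, y)}) (hq' : T' \ T = {(x'', y')})
    (hx : x < x'') (hy : y < y') (hc : (x'', y) ∈ APts ν) : IsRightRotation T T' := by
  have hqT : (x, y) ∈ T \ T' := by rw [hq]; rfl
  have hqT' : (x'', y') ∈ T' \ T := by rw [hq']; rfl
  have hR : ∀ r ∈ T, r ≠ (x, y) → r ∈ T' := by
    intro r hr hne
    by_contra hn
    have : r ∈ T \ T' := ⟨hr, hn⟩
    rw [hq] at this
    exact hne this
  have hR' : ∀ r ∈ T', r ≠ (x'', y') → r ∈ T := by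
    intro r hr hne
    by_contra hn
    have : r ∈ T' \ T := ⟨hr, hn⟩
    rw [hq'] at this
    exact hne this
  have hn : y' ≤ northSteps ν := (hT'.1 hqT'.1).2.2
  have c1 : ∀ a b, (a, b) ∈ T → (a, b) ≠ (x, y) → ¬ Incompatible ν (x, y) (a, b) :=
    fun a b h hne => hT.2.1 hqT.1 h hne.symm
  have c2 : ∀ a b, (a, b) ∈ T → (a, b) ≠ (x, y) → ¬ Incompatible ν (x'', y') (a, b) := by
    intro a b h hne
    refine hT'.2.1 hqT'.1 (hR _ h hne) ?_
    intro he
    rw [← he] at h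
    exact hqT'.2 h
  have up : ∀ a b, a ≤ x'' → y ≤ b → b ≤ y' → (a, b) ∈ APts ν :=
    fun a b ha hb hb' => APts_up_left hc ha hb (hb'.trans hn)
  have m1 : (x'', y) ∈ T := by
    refine mem_of_compatible hT hc ?_
    rintro ⟨a, b⟩ hr
    by_cases hne : (a, b) = (x, y)
    · rw [hne]
      rintro (⟨h1, h2, h3⟩ | ⟨h1, h2, h3⟩) <;> simp at h1 h2
    · rintro (⟨h1, h2, h3⟩ | ⟨h1, h2, h3⟩) <;> simp only at h1 h2 h3
      · exact c1 a b hr hne (Or.inl ⟨hx.trans h1, h2, h3⟩)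
      · exact c2 a b hr hne (Or.inr ⟨h1, h2.trans hy, h3⟩)
  have m2 : (x, y') ∈ T := by
    refine mem_of_compatible hT (up _ _ hx.le hy.le le_rfl) ?_
    rintro ⟨a, b⟩ hr
    by_cases hne : (a, b) = (x, y)
    · rw [hne]
      rintro (⟨h1, h2, h3⟩ | ⟨h1, h2, h3⟩) <;> simp at h1 h2
    · rintro (⟨h1, h2, h3⟩ | ⟨h1, h2, h3⟩) <;> simp only at h1 h2 h3
      · rcases le_or_gt a x'' with h | h
        · exact c1 a b hr hne (Or.inl ⟨h1, hy.trans h2, up _ _ h le_rfl hy.le⟩)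
        · exact c2 a b hr hne (Or.inl ⟨h, h2, h3⟩)
      · rcases le_or_gt y b with h | h
        · exact c2 a b hr hne (Or.inr ⟨h1.trans hx, h2, up _ _ le_rfl h h2.le⟩)
        · exact c1 a b hr hne (Or.inr ⟨h1, h, h3⟩)
  refine ⟨(x, y), (x'', y'), x, y, x'', y', rfl, rfl, hx, hy, hqT.1, m2, m1, ?_, ?_, ?_, ?_, ?_⟩
  · intro b h1 h2 h
    refine c2 x b h (fun e => ?_) (Or.inr ⟨hx, h2, up _ _ le_rfl h1.le h2.le⟩)
    simp at e; omega
  · intro a h1 h2 h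
    refine c2 a y h (fun e => ?_) (Or.inr ⟨h2, hy, hc⟩)
    simp at e; omega
  · intro a h1 h2 h
    refine c1 a y' h (fun e => ?_) (Or.inl ⟨h1, hy, up _ _ h2.le le_rfl hy.le⟩)
    simp at e; omega
  · intro b h1 h2 h
    refine c1 x'' b h (fun e => ?_) (Or.inl ⟨hx, h1, hc⟩)
    simp at e; omega
  · ext r
    constructor
    · intro hr
      by_cases hne : r = (x'', y')
      · exact Or.inr hne
      · refine Or.inl ⟨hR' r hr hne, fun e => ?_⟩
        have e' : r = (x, y) := e
        rw [e'] at hr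
        exact hqT.2 hr
    · rintro (⟨h1, h2⟩ | h)
      · exact hR r h1 h2
      · have e' : r = (x'', y') := h
        rw [e']
        exact hqT'.1

theorem differ_of_rotation {ν : List Bool} {T T' : Set (ℕ × ℕ)} (hT : IsNuTree ν T)
    (h : IsRightRotation T T') : (T \ T').ncard = 1 ∧ (T' \ T).ncard = 1 := by
  obtain ⟨q, q', x, y, x'', y', -, -, hx, hy, hq, -, hc, -, -, -, -, rfl⟩ := h
  have hn : (x'', y') ∉ T := by
    intro hm
    refine hT.2.1 hq hm (fun e => ?_) (Or.inl ⟨hx, hy, hT.1 hc⟩)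
    simp at e; omega
  have hne : (x, y) ≠ (x'', y') := fun e => by simp at e; omega
  rw [Set.ncard_eq_one, Set.ncard_eq_one]
  refine ⟨⟨(x, y), ?_⟩, ⟨(x'', y'), ?_⟩⟩
  · ext r
    simp only [Set.mem_sdiff, Set.mem_union, Set.mem_singleton_iff]
    constructor
    · tauto
    · rintro rfl
      tauto
  · ext r
    simp only [Set.mem_sdiff, Set.mem_union, Set.mem_singleton_iff]
    constructor
    · tauto
    · rintro rfl
      tauto

theorem differ_by_one_iff_rotation (ν : List Bool) (T T' : Set (ℕ × ℕ))
    (hT : IsNuTree ν T) (hT' : IsNuTree ν T') (hne : T ≠ T') :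
    ((T \ T').ncard = 1 ∧ (T' \ T).ncard = 1) ↔
      (IsRightRotation T T' ∨ IsRightRotation T' T) := by
  constructor
  · rintro ⟨h1, h2⟩
    rw [Set.ncard_eq_one] at h1 h2
    obtain ⟨⟨x, y⟩, h1⟩ := h1
    obtain ⟨⟨x'', y'⟩, h2⟩ := h2
    have hq' : (x'', y') ∈ T' \ T := by rw [h2]; rfl
    have hinc : Incompatible ν (x'', y') (x, y) := by
      by_contra hcon
      refine hq'.2 (mem_of_compatible hT (hT'.1 hq'.1) ?_)
      intro r hr
      by_cases hr' : r ∈ T'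
      · refine hT'.2.1 hq'.1 hr' ?_
        rintro rfl
        exact hq'.2 hr
      · have : r ∈ T \ T' := ⟨hr, hr'⟩
        rw [h1] at this
        have e : r = (x, y) := this
        rw [e]
        exact hcon
    rcases hinc with ⟨ha, hb, hc⟩ | ⟨ha, hb, hc⟩
    · exact Or.inr (rotation_of_lt hT' hT h2 h1 ha hb hc)
    · exact Or.inl (rotation_of_lt hT hT' h1 h2 ha hb hc)
  · rintro (h | h)
    · exact differ_of_rotation hT h
    · exact (differ_of_rotation hT' h).symm
end
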